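/- arXiv:2506.14287 — 2 statements merged into one kernel-verified Lean document; each statement's English description precedes it below -/
import Mathlib

section
/- Let P be a symmetric n×n real matrix, let x, x* ∈ ℝⁿ with x ≠ x*, let r = (x − x*)/‖x − x*‖, let E be an invertible n×n real matrix whose first column is r, let Γ ∈ ℝ, let D = diag(1 − Γ, 1, …, 1), let M = E D E⁻¹, and let f ∈ ℝⁿ. Then the Lyapunov derivative of the modulated vector field decomposes as 2 (x − x*)ᵀ P (M f) = 2 (x − x*)ᵀ P f − 2 Γ · (E⁻¹ f)₁ · ((x − x*)ᵀ P (x − x*)) / ‖x − x*‖, where (E⁻¹ f)₁ denotes the first coordinate of E⁻¹ f. -/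
open Matrix

/-!
Writing `D = 1 - Γ e₁e₁ᵀ` shows that the modulation is a rank-one perturbation of the identity,
`M = 1 - Γ r ρ`, where `r` is the first column of `E` and `ρ` the first row of `E⁻¹`. Hence `M f`
differs from `f` by a multiple of `r`, that is, of `x - x*`, and pairing this multiple with
`P (x - x*)` produces the quadratic form.
-/

theorem diagonal_ite_one_sub {ι R : Type*} [DecidableEq ι] [AddGroupWithOne R] (i : ι) (γ : R) :
    diagonal (fun j => if j = i then 1 - γ else 1) = 1 - single i i γ := by
  rw [← diagonal_single, ← diagonal_one, diagonal_sub]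
  congr 1 with j
  by_cases hj : j = i <;> simp [hj]

theorem mul_single_mul_eq_smul_vecMulVec {ι κ m n R : Type*} [Fintype ι] [Fintype κ]
    [DecidableEq ι] [DecidableEq κ] [CommSemiring R] (A : Matrix m ι R) (B : Matrix κ n R)
    (i : ι) (j : κ) (γ : R) :
    A * single i j γ * B = γ • vecMulVec (A.col i) (B.row j) := by
  have single_eq : single i j γ = γ • vecMulVec (Pi.single i 1) (Pi.single j 1) := by
    rw [← single_eq_single_vecMulVec_single, smul_single, smul_eq_mul, mul_one]
  rw [single_eq, Matrix.mul_smul, Matrix.smul_mul, mul_vecMulVec, vecMulVec_mul,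
    mulVec_single_one, single_one_vecMul]

section Modulation

variable {ι R : Type*} [Fintype ι] [DecidableEq ι] [CommRing R]

/-- The modulation matrix `E D E⁻¹` which scales the `i`-th basis direction of `E` by `1 - γ` and
fixes the others. The distinguished direction is an arbitrary index instead of the first one, and
`γ` is the value of the paper's `Γ` at the point under consideration. -/
noncomputable def modulationMatrix (E : Matrix ι ι R) (i : ι) (γ : R) : Matrix ι ι R :=
  E * diagonal (fun j => if j = i then 1 - γ else 1) * E⁻¹

theorem modulationMatrix_eq_one_sub {E : Matrix ι ι R} (hE : IsUnit E.det) (i : ι) (γ : R) :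
    modulationMatrix E i γ = 1 - γ • vecMulVec (E.col i) (E⁻¹.row i) := by
  rw [modulationMatrix, diagonal_ite_one_sub, mul_sub, sub_mul, mul_one, mul_nonsing_inv E hE,
    mul_single_mul_eq_smul_vecMulVec]

theorem modulationMatrix_mulVec {E : Matrix ι ι R} (hE : IsUnit E.det) (i : ι) (γ : R)
    (f : ι → R) :
    modulationMatrix E i γ *ᵥ f = f - (γ * (E⁻¹ *ᵥ f) i) • E.col i := by
  have row_dotProduct : E⁻¹.row i ⬝ᵥ f = (E⁻¹ *ᵥ f) i := rfl
  rw [modulationMatrix_eq_one_sub hE, sub_mulVec, one_mulVec, smul_mulVec, vecMulVec_mulVec,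
    op_smul_eq_smul, smul_smul, row_dotProduct]

theorem dotProduct_mulVec_modulationMatrix_mulVec {κ : Type*} [Fintype κ] {E : Matrix ι ι R}
    (hE : IsUnit E.det) (i : ι) (γ : R) (A : Matrix κ ι R) (u : κ → R) (f : ι → R) :
    u ⬝ᵥ A *ᵥ (modulationMatrix E i γ *ᵥ f) =
      u ⬝ᵥ A *ᵥ f - γ * (E⁻¹ *ᵥ f) i * (u ⬝ᵥ A *ᵥ E.col i) := by
  rw [modulationMatrix_mulVec hE, mulVec_sub, mulVec_smul, dotProduct_sub, dotProduct_smul,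
    smul_eq_mul]

end Modulation

theorem lyapunov_derivative_decomposition_general {ι : Type*} [Fintype ι] [DecidableEq ι]
    (P : Matrix ι ι ℝ) (x xstar : ι → ℝ) {E : Matrix ι ι ℝ} (hE : IsUnit E.det) (i : ι)
    (hEi : E.col i = (√((x - xstar) ⬝ᵥ (x - xstar)))⁻¹ • (x - xstar)) (Γ : ℝ) (f : ι → ℝ) :
    2 * ((x - xstar) ⬝ᵥ P *ᵥ (modulationMatrix E i Γ *ᵥ f)) =
      2 * ((x - xstar) ⬝ᵥ P *ᵥ f) -
        2 * Γ * (E⁻¹ *ᵥ f) i * ((x - xstar) ⬝ᵥ P *ᵥ (x - xstar)) /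
          √((x - xstar) ⬝ᵥ (x - xstar)) := by
  rw [dotProduct_mulVec_modulationMatrix_mulVec hE, hEi, mulVec_smul, dotProduct_smul,
    smul_eq_mul]
  ring

/-- Lyapunov-derivative decomposition of the modulated vector field:
with `P` symmetric, `r = (x − x*)/‖x − x*‖` (Euclidean norm) the first column
of an invertible matrix `E`, `D = diag(1 − Γ, 1, …, 1)` and `M = E D E⁻¹`,
`2 (x − x*)ᵀ P (M f) = 2 (x − x*)ᵀ P f
   − 2 Γ (E⁻¹ f)₁ ((x − x*)ᵀ P (x − x*)) / ‖x − x*‖`. -/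
theorem lyapunov_derivative_decomposition {n : ℕ} [NeZero n]
    (P : Matrix (Fin n) (Fin n) ℝ) (hP : P.IsSymm)
    (x xstar : Fin n → ℝ) (hx : x ≠ xstar)
    (r : Fin n → ℝ)
    (hr : r = (Real.sqrt ((x - xstar) ⬝ᵥ (x - xstar)))⁻¹ • (x - xstar))
    (E : Matrix (Fin n) (Fin n) ℝ) (hE : IsUnit E.det)
    (hEr : ∀ i, E i 0 = r i)
    (Γ : ℝ)
    (D M : Matrix (Fin n) (Fin n) ℝ)
    (hD : D = Matrix.diagonal (fun i => if i = 0 then 1 - Γ else 1))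
    (hM : M = E * D * E⁻¹)
    (f : Fin n → ℝ) :
    2 * ((x - xstar) ⬝ᵥ P.mulVec (M.mulVec f))
      = 2 * ((x - xstar) ⬝ᵥ P.mulVec f)
        - 2 * Γ * (E⁻¹.mulVec f 0)
            * ((x - xstar) ⬝ᵥ P.mulVec (x - xstar))
            / Real.sqrt ((x - xstar) ⬝ᵥ (x - xstar)) := by
  subst hr hD hM
  exact lyapunov_derivative_decomposition_general P x xstar hE 0 (funext hEr) Γ f
end

section
/- Let P be a symmetric positive definite n×n real matrix, let x* ∈ ℝⁿ, let A¹, …, A^K be n×n real matrices such that each Qᵏ = (Aᵏ)ᵀ P + P Aᵏ is symmetric negative definite, and let bᵏ = −Aᵏ x*. Let γ₁, …, γ_K : ℝⁿ → ℝ be continuous functions with γₖ(x) ≥ 0 for all x and k and Σₖ γₖ(x) = 1 for all x, and define f(x) = Σₖ γₖ(x) (Aᵏ x + bᵏ). Then every differentiable solution x : [0, ∞) → ℝⁿ of the ordinary differential equation x'(t) = f(x(t)) converges to the attractor: x(t) → x* as t → ∞. -/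
open Matrix

/-!
Along a solution, the derivative of `V x = (x - x*)ᵀ P (x - x*)` is the quadratic form of
`Mᵀ P + P M`, where `M` is the mixture of the `Aᵏ` active at that time. For a fixed rate `α`, the
inequality `Mᵀ P + P M ≤ -α P` of quadratic forms is convex in `M`, so it passes from the `Aᵏ` to
all their mixtures, however these vary along the solution. Compactness of the family of matrices
yields one rate `α > 0` for all of them, and Grönwall's inequality then gives exponential decay
of `V`.
-/

open Filter Set Topology

variable {ι : Type*} [Fintype ι]

section QuadraticForm

theorem exists_pos_mul_sq_norm_le_dotProduct_mulVec {S : Set (Matrix ι ι ℝ)} (hS : IsCompact S)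
    (hpos : ∀ N ∈ S, N.PosDef) :
    ∃ c > 0, ∀ N ∈ S, ∀ v : ι → ℝ, c * ‖v‖ ^ 2 ≤ v ⬝ᵥ N *ᵥ v := by
  obtain ⟨c, hc, hle⟩ : ∃ c > 0, ∀ q ∈ S ×ˢ Metric.sphere (0 : ι → ℝ) 1,
      c ≤ q.2 ⬝ᵥ q.1 *ᵥ q.2 := by
    refine (hS.prod (isCompact_sphere 0 1)).exists_forall_le' (by fun_prop) fun q hq => ?_
    have hq₀ : q.2 ≠ 0 := Metric.ne_of_mem_sphere hq.2 one_ne_zero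
    simpa using (hpos q.1 hq.1).dotProduct_mulVec_pos hq₀
  refine ⟨c, hc, fun N hN v => ?_⟩
  obtain rfl | hv := eq_or_ne v 0
  · simp
  have hunit : ‖v‖⁻¹ • v ∈ Metric.sphere (0 : ι → ℝ) 1 := by simp [norm_smul, hv]
  calc c * ‖v‖ ^ 2
      ≤ ((‖v‖⁻¹ • v) ⬝ᵥ N *ᵥ (‖v‖⁻¹ • v)) * ‖v‖ ^ 2 := by
        gcongr
        exact hle (N, ‖v‖⁻¹ • v) ⟨hN, hunit⟩
    _ = v ⬝ᵥ N *ᵥ v := by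
        simp only [mulVec_smul, smul_dotProduct, dotProduct_smul, smul_eq_mul]
        field [norm_ne_zero_iff.mpr hv]

theorem exists_pos_dotProduct_mulVec_le_mul_sq_norm (P : Matrix ι ι ℝ) :
    ∃ C > 0, ∀ v : ι → ℝ, v ⬝ᵥ P *ᵥ v ≤ C * ‖v‖ ^ 2 := by
  classical
  obtain ⟨C, hC, hle⟩ := (toBilin' P).toContinuousBilinearMap.isBoundedBilinearMap.bound
  refine ⟨C, hC, fun v => ?_⟩
  have hv : |v ⬝ᵥ P *ᵥ v| ≤ C * ‖v‖ * ‖v‖ := by simpa [toBilin'_apply'] using hle v v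
  linarith [le_abs_self (v ⬝ᵥ P *ᵥ v)]

theorem dotProduct_lyapunov_mulVec (P M : Matrix ι ι ℝ) (v : ι → ℝ) :
    v ⬝ᵥ (Mᵀ * P + P * M) *ᵥ v = v ⬝ᵥ P *ᵥ (M *ᵥ v) + (M *ᵥ v) ⬝ᵥ P *ᵥ v := by
  rw [add_mulVec, dotProduct_add, ← mulVec_mulVec, ← mulVec_mulVec, dotProduct_transpose_mulVec,
    dotProduct_comm (P *ᵥ v), add_comm]

theorem hasDerivWithinAt_dotProduct_mulVec (P : Matrix ι ι ℝ) {y : ℝ → ι → ℝ} {y' : ι → ℝ}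
    {s : Set ℝ} {t : ℝ} (hy : HasDerivWithinAt y y' s t) :
    HasDerivWithinAt (fun r => y r ⬝ᵥ P *ᵥ y r) (y t ⬝ᵥ P *ᵥ y' + y' ⬝ᵥ P *ᵥ y t) s t := by
  classical
  simpa [toBilin'_apply'] using
    (toBilin' P).toContinuousBilinearMap.hasDerivWithinAt_of_bilinear hy hy

end QuadraticForm

section LyapunovDecay

/-- The matrices `M` with `Mᵀ P + P M ≤ -α P` as quadratic forms: those for which
`V v = vᵀ P v` decays at rate at least `α` along the flow `v' = M v`. -/
def lyapunovDecaySet (P : Matrix ι ι ℝ) (α : ℝ) : Set (Matrix ι ι ℝ) :=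
  {M | ∀ v, v ⬝ᵥ (Mᵀ * P + P * M) *ᵥ v ≤ -α * (v ⬝ᵥ P *ᵥ v)}

theorem convex_lyapunovDecaySet (P : Matrix ι ι ℝ) (α : ℝ) : Convex ℝ (lyapunovDecaySet P α) := by
  intro M hM N hN a b ha hb hab v
  calc v ⬝ᵥ ((a • M + b • N)ᵀ * P + P * (a • M + b • N)) *ᵥ v
      = a * (v ⬝ᵥ (Mᵀ * P + P * M) *ᵥ v) + b * (v ⬝ᵥ (Nᵀ * P + P * N) *ᵥ v) := by
        simp only [dotProduct_lyapunov_mulVec]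
        simp only [add_mulVec, smul_mulVec, mulVec_add, mulVec_smul,
          add_dotProduct, dotProduct_add, smul_dotProduct, dotProduct_smul, smul_eq_mul]
        ring
    _ ≤ a * (-α * (v ⬝ᵥ P *ᵥ v)) + b * (-α * (v ⬝ᵥ P *ᵥ v)) := by
        gcongr
        exacts [hM v, hN v]
    _ = -α * (v ⬝ᵥ P *ᵥ v) := by rw [← add_mul, hab, one_mul]

theorem exists_pos_subset_lyapunovDecaySet (P : Matrix ι ι ℝ) {S : Set (Matrix ι ι ℝ)}
    (hS : IsCompact S) (hneg : ∀ M ∈ S, (-(Mᵀ * P + P * M)).PosDef) :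
    ∃ α > 0, S ⊆ lyapunovDecaySet P α := by
  have hcont : Continuous fun M : Matrix ι ι ℝ => -(Mᵀ * P + P * M) := by fun_prop
  obtain ⟨c, hc, hlower⟩ := exists_pos_mul_sq_norm_le_dotProduct_mulVec (hS.image hcont)
    (forall_mem_image.2 hneg)
  obtain ⟨C, hC, hupper⟩ := exists_pos_dotProduct_mulVec_le_mul_sq_norm P
  refine ⟨c / C, by positivity, fun M hM v => ?_⟩
  have hdom : c / C * (v ⬝ᵥ P *ᵥ v) ≤ v ⬝ᵥ (-(Mᵀ * P + P * M)) *ᵥ v := calc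
    c / C * (v ⬝ᵥ P *ᵥ v) ≤ c / C * (C * ‖v‖ ^ 2) := by gcongr; exact hupper v
    _ = c * ‖v‖ ^ 2 := by field
    _ ≤ v ⬝ᵥ (-(Mᵀ * P + P * M)) *ᵥ v := hlower _ (mem_image_of_mem _ hM) v
  rw [neg_mulVec, dotProduct_neg] at hdom
  linarith

end LyapunovDecay

section ExponentialDecay

theorem le_mul_exp_of_deriv_right_le_mul {g g' : ℝ → ℝ} {K : ℝ} (hg : ContinuousOn g (Ici 0))
    (hg' : ∀ t, 0 ≤ t → HasDerivWithinAt g (g' t) (Ici t) t)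
    (hle : ∀ t, 0 ≤ t → g' t ≤ K * g t) {t : ℝ} (ht : 0 ≤ t) :
    g t ≤ g 0 * Real.exp (K * t) := by
  have hgronwall := le_gronwallBound_of_liminf_deriv_right_le (ε := 0)
    (hg.mono Icc_subset_Ici_self)
    (fun s hs _ hr => (hg' s hs.1).liminf_right_slope_le hr)
    le_rfl (fun s hs => by simpa using hle s hs.1) t (right_mem_Icc.2 ht)
  simpa [gronwallBound_ε0] using hgronwall

theorem tendsto_zero_of_norm_le_mul_exp {E : Type*} [SeminormedAddCommGroup E] {y : ℝ → E}
    {C β : ℝ} (hβ : 0 < β) (hy : ∀ t, 0 ≤ t → ‖y t‖ ≤ C * Real.exp (-β * t)) :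
    Tendsto y atTop (𝓝 0) := by
  have hexp : Tendsto (fun t => Real.exp (-β * t)) atTop (𝓝 0) :=
    Real.tendsto_exp_atBot.comp (tendsto_id.const_mul_atTop_of_neg (neg_neg_of_pos hβ))
  refine squeeze_zero_norm' ?_ (by simpa only [mul_zero] using hexp.const_mul C)
  filter_upwards [eventually_ge_atTop 0] with t ht using hy t ht

end ExponentialDecay

section DifferentialInclusion

variable {P : Matrix ι ι ℝ}

theorem dotProduct_mulVec_le_mul_exp_of_mem_lyapunovDecaySet {α : ℝ} {y : ℝ → ι → ℝ}
    (hcont : ContinuousOn y (Ici 0))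
    (hy : ∀ t, 0 ≤ t → ∃ M ∈ lyapunovDecaySet P α, HasDerivWithinAt y (M *ᵥ y t) (Ici t) t)
    {t : ℝ} (ht : 0 ≤ t) :
    y t ⬝ᵥ P *ᵥ y t ≤ (y 0 ⬝ᵥ P *ᵥ y 0) * Real.exp (-α * t) := by
  choose! M hM hderiv using hy
  refine le_mul_exp_of_deriv_right_le_mul (g := fun s => y s ⬝ᵥ P *ᵥ y s)
    (by fun_prop) (fun s hs => hasDerivWithinAt_dotProduct_mulVec P (hderiv s hs))
    (fun s hs => ?_) ht
  rw [← dotProduct_lyapunov_mulVec]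
  exact hM s hs (y s)

theorem exists_norm_le_mul_exp_of_mem_convexHull (hP : P.PosDef) {S : Set (Matrix ι ι ℝ)}
    (hS : IsCompact S) (hneg : ∀ M ∈ S, (-(Mᵀ * P + P * M)).PosDef) :
    ∃ C > 0, ∃ β > 0, ∀ y : ℝ → ι → ℝ, ContinuousOn y (Ici 0) →
      (∀ t, 0 ≤ t → ∃ M ∈ convexHull ℝ S, HasDerivWithinAt y (M *ᵥ y t) (Ici t) t) →
      ∀ t, 0 ≤ t → ‖y t‖ ≤ C * Real.exp (-β * t) * ‖y 0‖ := by
  obtain ⟨α, hα, hSα⟩ := exists_pos_subset_lyapunovDecaySet P hS hneg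
  obtain ⟨c, hc, hlower⟩ := exists_pos_mul_sq_norm_le_dotProduct_mulVec
    (isCompact_singleton (x := P)) (by simpa using hP)
  obtain ⟨C, hC, hupper⟩ := exists_pos_dotProduct_mulVec_le_mul_sq_norm P
  have hhull : convexHull ℝ S ⊆ lyapunovDecaySet P α :=
    convexHull_min hSα (convex_lyapunovDecaySet P α)
  refine ⟨√(C / c), by positivity, α / 2, by positivity, fun y hcont hy t ht => ?_⟩
  have hV : y t ⬝ᵥ P *ᵥ y t ≤ (y 0 ⬝ᵥ P *ᵥ y 0) * Real.exp (-α * t) :=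
    dotProduct_mulVec_le_mul_exp_of_mem_lyapunovDecaySet hcont
      (fun s hs => (hy s hs).imp fun _ hM => ⟨hhull hM.1, hM.2⟩) ht
  have hexp : Real.exp (-α * t) = Real.exp (-(α / 2) * t) ^ 2 := by
    rw [← Real.exp_nat_mul]
    ring_nf
  refine le_of_sq_le_sq ?_ (by positivity)
  calc ‖y t‖ ^ 2
      ≤ (y t ⬝ᵥ P *ᵥ y t) / c := by
        rw [le_div_iff₀' hc]
        exact hlower P rfl (y t)
    _ ≤ (y 0 ⬝ᵥ P *ᵥ y 0) * Real.exp (-α * t) / c := by gcongr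
    _ ≤ C * ‖y 0‖ ^ 2 * Real.exp (-α * t) / c := by
        gcongr
        exact hupper (y 0)
    _ = (√(C / c) * Real.exp (-(α / 2) * t) * ‖y 0‖) ^ 2 := by
        rw [mul_pow, mul_pow, Real.sq_sqrt (by positivity), hexp]
        ring

theorem ds_global_asymptotic_stability_general (hP : P.PosDef) {S : Set (Matrix ι ι ℝ)}
    (hS : IsCompact S) (hneg : ∀ M ∈ S, (-(Mᵀ * P + P * M)).PosDef) {xstar : ι → ℝ}
    {x : ℝ → ι → ℝ} (hcont : ContinuousOn x (Ici 0))
    (hx : ∀ t, 0 ≤ t →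
      ∃ M ∈ convexHull ℝ S, HasDerivWithinAt x (M *ᵥ (x t - xstar)) (Ici t) t) :
    Tendsto x atTop (𝓝 xstar) := by
  obtain ⟨C, -, β, hβ, hdecay⟩ := exists_norm_le_mul_exp_of_mem_convexHull hP hS hneg
  have hbound := hdecay (fun t => x t - xstar) (by fun_prop) fun t ht =>
    (hx t ht).imp fun _ hM => ⟨hM.1, hM.2.sub_const xstar⟩
  exact tendsto_sub_nhds_zero_iff.1 <|
    tendsto_zero_of_norm_le_mul_exp (C := C * ‖x 0 - xstar‖) hβ fun t ht =>
      (hbound t ht).trans_eq (mul_right_comm _ _ _)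

end DifferentialInclusion

/-- Global asymptotic stability of the DS motion policy: with `P ≻ 0`
symmetric, `Qᵏ = (Aᵏ)ᵀ P + P Aᵏ` symmetric negative definite,
`bᵏ = −Aᵏ x*`, and continuous mixing functions `γₖ ≥ 0` summing to `1`
pointwise, every differentiable solution of `x' = f(x)` on `[0, ∞)` with
`f(x) = Σₖ γₖ(x) (Aᵏ x + bᵏ)` converges to the attractor `x*`. -/
theorem ds_global_asymptotic_stability {n K : ℕ}
    (P : Matrix (Fin n) (Fin n) ℝ) (hP : P.PosDef)
    (xstar : Fin n → ℝ)
    (A Q : Fin K → Matrix (Fin n) (Fin n) ℝ)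
    (hQ : ∀ k, Q k = (A k)ᵀ * P + P * A k)
    (hQneg : ∀ k, (-(Q k)).PosDef)
    (b : Fin K → (Fin n → ℝ))
    (hb : ∀ k, b k = -(A k).mulVec xstar)
    (γ : Fin K → (Fin n → ℝ) → ℝ)
    (hγcont : ∀ k, Continuous (γ k))
    (hγnn : ∀ k x, 0 ≤ γ k x)
    (hγsum : ∀ x, ∑ k, γ k x = 1)
    (f : (Fin n → ℝ) → (Fin n → ℝ))
    (hf : ∀ x, f x = ∑ k, γ k x • ((A k).mulVec x + b k))
    (x : ℝ → (Fin n → ℝ))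
    (hx : ∀ t, 0 ≤ t → HasDerivAt x (f (x t)) t) :
    Filter.Tendsto x Filter.atTop (nhds xstar) := by
  have hmix (y : Fin n → ℝ) : f y = (∑ k, γ k y • A k) *ᵥ (y - xstar) := by
    simp only [hf, hb, sum_mulVec, smul_mulVec, ← sub_eq_add_neg, ← mulVec_sub]
  exact ds_global_asymptotic_stability_general hP (finite_range A).isCompact
    (forall_mem_range.2 fun k => hQ k ▸ hQneg k) (HasDerivAt.continuousOn hx) fun t ht =>
      ⟨∑ k, γ k (x t) • A k, mem_convexHull_of_exists_fintype _ A (hγnn · _) (hγsum _)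
        mem_range_self rfl, hmix (x t) ▸ (hx t ht).hasDerivWithinAt⟩
end
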